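/- arXiv:1107.2735 — 3 statements merged into one kernel-verified Lean document; each statement's English description precedes it below -/
import Mathlib

section
/- Let n ≥ 3 be an integer, let η > 0, and let m, α, β satisfy 0 < m < (n−2)/n, β > 0, and α = 2β/(1−m). Let v be a radial solution of (E) on [0,∞) and set w(r) = r²·v(r)^{1−m}. Then there exist constants C₁ > 0, C₂ > 0, C₃ > 0 such that r·w'(r)/w(r) ≤ C₁ for all r > 0, and C₂ ≤ r·w'(r) ≤ C₃ for all r ≥ 1. Moreover w(r) → ∞ as r → ∞. -/
open Real Set Filter

/-- `v` is a radial solution of the elliptic equation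
`((n-1)/m)·((v^m)'' + ((n-1)/r)(v^m)') + α v + β r v' = 0` on `[0, ∞)`
with `v > 0`, `v(0) = η`, `v'(0) = 0`. -/
def IsRadialSol (n : ℕ) (m α β η : ℝ) (v : ℝ → ℝ) : Prop :=
  (∀ r ∈ Set.Ici (0:ℝ), 0 < v r) ∧
  ContinuousOn v (Set.Ici (0:ℝ)) ∧
  ContDiffOn ℝ 2 v (Set.Ioi (0:ℝ)) ∧
  HasDerivWithinAt v 0 (Set.Ici (0:ℝ)) 0 ∧
  v 0 = η ∧
  ∀ r ∈ Set.Ioi (0:ℝ),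
    (((n : ℝ) - 1) / m) * (deriv (deriv (fun s => v s ^ m)) r
      + (((n : ℝ) - 1) / r) * deriv (fun s => v s ^ m) r)
    + α * v r + β * r * deriv v r = 0

/-!
With primes for derivatives in `t = log r`, the profile `w = r² v^(1-m)` and its slope `q = w' / w`
solve the autonomous Emden–Fowler system `w' = w q`, `q' = -k (q - 2)² - N (q - 2) - b w q` with
`k = m / (1 - m)`, `N = n - 2`, `b = β / (n - 1)`, and `v(0) > 0` says that `w e^(-2t)` has a
positive limit at `-∞`. Levels of `q` that can be crossed in one direction only then trap the orbit
in `0 < q ≤ 2`: an orbit beyond such a level would have been there at all earlier times,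
which is incompatible with the growth of `w` at `-∞`. The flux `y = w q` satisfies
`y' = w (ρ(q) - b y)`, where `ρ(0) = 2 N - 4 k > 0` is exactly the condition `m < (n - 2) / n`.
So `y` decreases when it is large; when it is small so is `q ≤ y / w(t₀)`, and `y` increases.
Hence `w' = y` stays between positive constants.
-/

open scoped Topology

section Barrier

variable {f f' : ℝ → ℝ} {a b c : ℝ}

theorem le_of_deriv_neg_of_eq (hab : a ≤ b) (hf : ∀ x ∈ Icc a b, HasDerivAt f (f' x) x)
    (hf' : ∀ x ∈ Icc a b, f x = c → f' x < 0) (ha : f a ≤ c) : f b ≤ c :=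
  image_le_of_deriv_right_lt_deriv_boundary' (B := fun _ ↦ c) (B' := fun _ ↦ 0)
    (fun x hx ↦ (hf x hx).continuousAt.continuousWithinAt)
    (fun x hx ↦ (hf x (Ico_subset_Icc_self hx)).hasDerivWithinAt) ha continuousOn_const
    (fun x _ ↦ hasDerivWithinAt_const x _ c) (fun x hx ↦ hf' x (Ico_subset_Icc_self hx))
    (right_mem_Icc.2 hab)

theorem ge_of_deriv_pos_of_eq (hab : a ≤ b) (hf : ∀ x ∈ Icc a b, HasDerivAt f (f' x) x)
    (hf' : ∀ x ∈ Icc a b, f x = c → 0 < f' x) (ha : c ≤ f a) : c ≤ f b :=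
  neg_le_neg_iff.1 <| le_of_deriv_neg_of_eq hab (f := fun x ↦ -f x) (fun x hx ↦ (hf x hx).neg)
    (fun x hx h ↦ neg_neg_of_pos (hf' x hx (neg_injective h))) (neg_le_neg ha)

end Barrier

theorem tendsto_atTop_of_le_deriv {f f' : ℝ → ℝ} {a C : ℝ} (hC : 0 < C)
    (hf : ∀ x ≥ a, HasDerivAt f (f' x) x) (hf' : ∀ x ≥ a, C ≤ f' x) : Tendsto f atTop atTop := by
  have hlin : ∀ x ≥ a, f a + C * (x - a) ≤ f x := by
    intro x hx
    have := (convex_Ici a).mul_sub_le_image_sub_of_le_deriv (f := f) (C := C)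
      (fun y hy ↦ (hf y hy).continuousAt.continuousWithinAt)
      (fun y hy ↦ (hf y (interior_subset hy)).differentiableAt.differentiableWithinAt)
      (fun y hy ↦ (hf y (interior_subset hy)).deriv ▸ hf' y (interior_subset hy))
      a self_mem_Ici x hx hx
    linarith
  refine tendsto_atTop_mono' atTop ((eventually_ge_atTop a).mono hlin) ?_
  exact tendsto_atTop_add_const_left _ _
    ((tendsto_atTop_add_const_right _ (-a) tendsto_id).const_mul_atTop hC)

theorem tendsto_zero_of_tendsto_mul_exp_neg {f : ℝ → ℝ} {p L : ℝ} (hp : 0 < p)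
    (hf : Tendsto (fun t ↦ f t * exp (-(p * t))) atBot (𝓝 L)) : Tendsto f atBot (𝓝 0) := by
  have hexp : Tendsto (fun t : ℝ ↦ exp (p * t)) atBot (𝓝 0) :=
    tendsto_exp_atBot.comp (tendsto_id.const_mul_atBot hp)
  simpa [mul_assoc, ← exp_add] using hf.mul hexp

/-- `(w, q)` is an entire orbit of the autonomous Emden–Fowler system
`w' = w q`, `q' = -k (q - 2)² - N (q - 2) - b w q` in the phase plane, with `w > 0`.
The radial solutions of the elliptic equation become such orbits in the time `t = log r`. -/
structure IsFowlerOrbit (k N b : ℝ) (w q : ℝ → ℝ) : Prop where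
  pos : ∀ t, 0 < w t
  hasDerivAt_fst : ∀ t, HasDerivAt w (w t * q t) t
  hasDerivAt_snd : ∀ t, HasDerivAt q (-k * (q t - 2) ^ 2 - N * (q t - 2) - b * w t * q t) t

/-- The rate `ρ` in the equation `(w q)' = w (ρ(q) - b w q)` for the flux `w q` of an
Emden–Fowler orbit. -/
def fluxRate (k N x : ℝ) : ℝ := x ^ 2 - k * (x - 2) ^ 2 - N * (x - 2)

theorem exists_abs_fluxRate_sub_le (k N : ℝ) :
    ∃ D ≥ 0, ∀ x ∈ Icc (0 : ℝ) 2, |fluxRate k N x - (2 * N - 4 * k)| ≤ D * x := by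
  refine ⟨|4 * k - N| + |1 - k| * 2, by positivity, fun x ⟨hx0, hx2⟩ ↦ ?_⟩
  calc |fluxRate k N x - (2 * N - 4 * k)|
      = |4 * k - N + (1 - k) * x| * x := by
        rw [← abs_of_nonneg hx0, ← abs_mul, abs_of_nonneg hx0, fluxRate]
        ring_nf
    _ ≤ (|4 * k - N| + |(1 - k) * x|) * x := by gcongr; exact abs_add_le _ _
    _ ≤ (|4 * k - N| + |1 - k| * 2) * x := by rw [abs_mul, abs_of_nonneg hx0]; gcongr

namespace IsFowlerOrbit

variable {k N b L : ℝ} {w q : ℝ → ℝ}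

theorem monotoneOn_fst_mul_exp (h : IsFowlerOrbit k N b w q) {c t : ℝ}
    (hq : ∀ s ≤ t, c ≤ q s) : MonotoneOn (fun s ↦ w s * exp (-(c * s))) (Iic t) := by
  have hderiv (s : ℝ) : HasDerivAt (fun s ↦ w s * exp (-(c * s)))
      (w s * exp (-(c * s)) * (q s - c)) s := by
    refine ((h.hasDerivAt_fst s).mul (hasDerivAt_const_mul c).fun_neg.exp).congr_deriv ?_
    ring
  refine monotoneOn_of_hasDerivWithinAt_nonneg (convex_Iic t)
    (fun s _ ↦ (hderiv s).continuousAt.continuousWithinAt)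
    (fun s _ ↦ (hderiv s).hasDerivWithinAt) fun s hs ↦ ?_
  exact mul_nonneg (mul_pos (h.pos s) (exp_pos _)).le
    (sub_nonneg.2 (hq s (mem_Iic.1 (interior_subset hs))))

theorem snd_nonneg (h : IsFowlerOrbit k N b w q) (hkN : 2 * k < N)
    (hw : Tendsto w atBot (𝓝 0)) (t : ℝ) : 0 ≤ q t := by
  by_contra! ht
  have hq : ∀ s ≤ t, q s ≤ 0 := by
    intro s hst
    by_contra! hs
    refine ht.not_ge (ge_of_deriv_pos_of_eq hst (fun x _ ↦ h.hasDerivAt_snd x) ?_ hs.le)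
    intro x _ hx
    rw [hx]
    linarith
  have hanti : AntitoneOn w (Iic t) :=
    antitoneOn_of_hasDerivWithinAt_nonpos (convex_Iic t)
      (fun s _ ↦ (h.hasDerivAt_fst s).continuousAt.continuousWithinAt)
      (fun s _ ↦ (h.hasDerivAt_fst s).hasDerivWithinAt)
      fun s hs ↦ mul_nonpos_of_nonneg_of_nonpos (h.pos s).le (hq s (mem_Iic.1 (interior_subset hs)))
  have hwt : w t ≤ 0 :=
    ge_of_tendsto hw ((eventually_le_atBot t).mono fun s hs ↦ hanti hs self_mem_Iic hs)
  exact (h.pos t).not_ge hwt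

theorem snd_pos (h : IsFowlerOrbit k N b w q) (hkN : 2 * k < N)
    (hw : Tendsto w atBot (𝓝 0)) (t : ℝ) : 0 < q t := by
  refine (h.snd_nonneg hkN hw t).lt_of_ne' fun ht ↦ ?_
  have hmin : IsLocalMin q t := .of_forall fun s ↦ ht ▸ h.snd_nonneg hkN hw s
  have := hmin.hasDerivAt_eq_zero (h.hasDerivAt_snd t)
  rw [ht] at this
  linarith

theorem snd_le_two (h : IsFowlerOrbit k N b w q) (hN : 0 < N) (hb : 0 ≤ b) (hL : 0 < L)
    (hw : Tendsto (fun t ↦ w t * exp (-(2 * t))) atBot (𝓝 L)) (t : ℝ) : q t ≤ 2 := by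
  by_contra! ht
  obtain ⟨c, hc2, hct, hNc⟩ : ∃ c > 2, c < q t ∧ 0 < N + k * (c - 2) := by
    have hcont : Continuous fun c : ℝ ↦ N + k * (c - 2) := by fun_prop
    have hNc : ∀ᶠ c in 𝓝 (2 : ℝ), 0 < N + k * (c - 2) :=
      hcont.continuousAt.eventually_const_lt (by simpa using hN)
    have hnear : ∀ᶠ c in 𝓝[>] (2 : ℝ), c < q t ∧ 0 < N + k * (c - 2) :=
      nhdsWithin_le_nhds ((eventually_lt_nhds ht).and hNc)
    exact (eventually_mem_nhdsWithin.and hnear).exists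
  have hq : ∀ s ≤ t, c ≤ q s := by
    intro s hst
    by_contra! hs
    refine hct.not_ge (le_of_deriv_neg_of_eq hst (fun x _ ↦ h.hasDerivAt_snd x) ?_ hs.le)
    intro x _ hx
    have hdrift : 0 < (N + k * (c - 2)) * (c - 2) := mul_pos hNc (by linarith)
    have habs : 0 ≤ b * w x * c := mul_nonneg (mul_nonneg hb (h.pos x).le) (by linarith)
    rw [hx]
    linarith
  have hupper : ∀ s ≤ t, w s * exp (-(2 * s)) ≤ w t * exp (-(c * t)) * exp ((c - 2) * s) := by
    intro s hst
    calc w s * exp (-(2 * s)) = w s * exp (-(c * s)) * exp ((c - 2) * s) := by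
          rw [mul_assoc, ← exp_add]; ring_nf
      _ ≤ w t * exp (-(c * t)) * exp ((c - 2) * s) := by
          gcongr ?_ * _; exact h.monotoneOn_fst_mul_exp hq hst self_mem_Iic hst
  have hzero : Tendsto (fun s ↦ w t * exp (-(c * t)) * exp ((c - 2) * s)) atBot (𝓝 0) := by
    simpa using (tendsto_exp_atBot.comp
      (tendsto_id.const_mul_atBot (sub_pos.2 hc2))).const_mul (w t * exp (-(c * t)))
  exact hL.not_ge (le_of_tendsto_of_tendsto hw hzero ((eventually_le_atBot t).mono hupper))

theorem hasDerivAt_flux (h : IsFowlerOrbit k N b w q) (t : ℝ) :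
    HasDerivAt (fun t ↦ w t * q t) (w t * (fluxRate k N (q t) - b * (w t * q t))) t := by
  refine ((h.hasDerivAt_fst t).mul (h.hasDerivAt_snd t)).congr_deriv ?_
  rw [fluxRate]
  ring

theorem fst_monotone (h : IsFowlerOrbit k N b w q) (hq : ∀ t, 0 ≤ q t) : Monotone w :=
  monotone_of_hasDerivAt_nonneg h.hasDerivAt_fst fun t ↦ mul_nonneg (h.pos t).le (hq t)

theorem exists_flux_le (h : IsFowlerOrbit k N b w q) (hb : 0 < b) (hq : ∀ t, q t ∈ Icc 0 2)
    (t₀ : ℝ) : ∃ C, ∀ t ≥ t₀, w t * q t ≤ C := by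
  obtain ⟨D, hD, hrate⟩ := exists_abs_fluxRate_sub_le k N
  have hrate_le (t : ℝ) : fluxRate k N (q t) ≤ 2 * N - 4 * k + D * 2 := by
    have := (abs_le.1 (hrate _ (hq t))).2
    have : D * q t ≤ D * 2 := by gcongr; exact (hq t).2
    linarith
  refine ⟨max (w t₀ * q t₀) ((2 * N - 4 * k + D * 2 + 1) / b), fun t ht ↦ ?_⟩
  refine le_of_deriv_neg_of_eq (f := fun s ↦ w s * q s) ht
    (fun s _ ↦ h.hasDerivAt_flux s) (fun s _ hs ↦ ?_) (le_max_left _ _)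
  have hlarge : (2 * N - 4 * k + D * 2 + 1) / b ≤ w s * q s := hs ▸ le_max_right _ _
  rw [div_le_iff₀' hb] at hlarge
  exact mul_neg_of_pos_of_neg (h.pos s) (by linarith [hrate_le s])

theorem exists_pos_le_flux (h : IsFowlerOrbit k N b w q) (hkN : 2 * k < N) (hb : 0 ≤ b)
    (hq : ∀ t, q t ∈ Ioc 0 2) (t₀ : ℝ) : ∃ C > 0, ∀ t ≥ t₀, C ≤ w t * q t := by
  obtain ⟨D, hD, hrate⟩ := exists_abs_fluxRate_sub_le k N
  have hw₀ := h.pos t₀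
  obtain ⟨δ, hδ, hδ_small⟩ :=
    exists_pos_mul_lt (show 0 < 2 * N - 4 * k by linarith) (D / w t₀ + b)
  refine ⟨min (w t₀ * q t₀) δ, lt_min (mul_pos hw₀ (hq t₀).1) hδ, fun t ht ↦ ?_⟩
  refine ge_of_deriv_pos_of_eq (f := fun s ↦ w s * q s) ht
    (fun s _ ↦ h.hasDerivAt_flux s) (fun s hs hmin ↦ ?_) (min_le_left _ _)
  refine mul_pos (h.pos s) (sub_pos.2 ?_)
  have hflux : w s * q s ≤ δ := hmin ▸ min_le_right _ _
  have hslope : q s ≤ δ / w t₀ := by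
    rw [le_div_iff₀' hw₀]
    refine le_trans ?_ hflux
    gcongr
    exacts [(hq s).1.le, h.fst_monotone (fun t ↦ (hq t).1.le) hs.1]
  calc b * (w s * q s) ≤ b * δ := by gcongr
    _ < 2 * N - 4 * k - D * (δ / w t₀) := by linear_combination hδ_small
    _ ≤ 2 * N - 4 * k - D * q s := by gcongr
    _ ≤ fluxRate k N (q s) := by linarith [(abs_le.1 (hrate _ (Ioc_subset_Icc_self (hq s)))).1]

end IsFowlerOrbit

/-- The logarithmic slope `r v'(r) / v(r)`, which is the derivative of `log v` with respect to
`log r`. -/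
noncomputable def logSlope (v : ℝ → ℝ) (r : ℝ) : ℝ := r * deriv v r / v r

/-- The function `r² v(r)^(1-m)` of the theorem, the first phase-plane coordinate of a radial
solution. -/
noncomputable def fowlerProfile (m : ℝ) (v : ℝ → ℝ) (r : ℝ) : ℝ := r ^ 2 * v r ^ (1 - m)

section Differentiation

variable {v : ℝ → ℝ} {r : ℝ}

theorem hasDerivAt_fowlerProfile (m : ℝ) (hv : DifferentiableAt ℝ v r) (hr : r ≠ 0)
    (hvr : v r ≠ 0) :
    HasDerivAt (fowlerProfile m v)
      (fowlerProfile m v r * (2 + (1 - m) * logSlope v r) / r) r := by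
  refine ((hasDerivAt_pow 2 r).mul
    (hv.hasDerivAt.rpow_const (p := 1 - m) (Or.inl hvr))).congr_deriv ?_
  rw [fowlerProfile, logSlope, rpow_sub_one hvr, eq_div_iff hr]
  field_simp
  push_cast
  ring

theorem hasDerivAt_logSlope (hv : ContDiffAt ℝ 2 v r) (hr : r ≠ 0) (hvr : v r ≠ 0) :
    HasDerivAt (logSlope v)
      ((logSlope v r + r ^ 2 * deriv (deriv v) r / v r - logSlope v r ^ 2) / r) r := by
  have hv' : DifferentiableAt ℝ (deriv v) r :=
    (hv.derivWithin (m := 1) (by norm_num)).differentiableAt (by norm_num)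
  have hv₁ : DifferentiableAt ℝ v r := hv.differentiableAt (by norm_num)
  refine (((hasDerivAt_id r).mul hv'.hasDerivAt).div hv₁.hasDerivAt hvr).congr_deriv ?_
  simp only [Pi.mul_apply, id_eq, logSlope]
  field_simp

theorem deriv_deriv_rpow_const (p : ℝ) (hv : ContDiffAt ℝ 2 v r) (hvr : v r ≠ 0) :
    deriv (deriv fun s ↦ v s ^ p) r =
      p * (deriv (deriv v) r * v r ^ (p - 1) + (p - 1) * deriv v r ^ 2 * v r ^ (p - 2)) := by
  have hv' : DifferentiableAt ℝ (deriv v) r :=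
    (hv.derivWithin (m := 1) (by norm_num)).differentiableAt (by norm_num)
  have hfst : deriv (fun s ↦ v s ^ p) =ᶠ[𝓝 r] fun s ↦ deriv v s * p * v s ^ (p - 1) := by
    filter_upwards [hv.eventually (by norm_num), hv.continuousAt.eventually_ne hvr] with s hs hvs
    exact deriv_rpow_const (hs.differentiableAt (by norm_num)) (Or.inl hvs)
  have hsnd := (hv'.hasDerivAt.mul_const p).mul
    ((hv.differentiableAt (by norm_num)).hasDerivAt.rpow_const (p := p - 1) (Or.inl hvr))
  rw [hfst.deriv_eq]
  refine hsnd.deriv.trans ?_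
  rw [sub_sub, one_add_one_eq_two]
  ring

end Differentiation

namespace IsRadialSol

variable {n : ℕ} {m α β η r : ℝ} {v : ℝ → ℝ}

theorem pos (hv : IsRadialSol n m α β η v) (hr : 0 ≤ r) : 0 < v r := hv.1 r hr

theorem eta_pos (hv : IsRadialSol n m α β η v) : 0 < η := hv.2.2.2.2.1 ▸ hv.pos le_rfl

theorem contDiffAt (hv : IsRadialSol n m α β η v) (hr : 0 < r) : ContDiffAt ℝ 2 v r :=
  hv.2.2.1.contDiffAt (Ioi_mem_nhds hr)

theorem tendsto_nhdsGT_zero (hv : IsRadialSol n m α β η v) : Tendsto v (𝓝[>] 0) (𝓝 η) := by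
  obtain ⟨-, hcont, -, -, hv0, -⟩ := hv
  exact hv0 ▸ (hcont 0 self_mem_Ici).mono_left (nhdsWithin_mono _ Ioi_subset_Ici_self)

theorem sq_mul_deriv_deriv_div (hv : IsRadialSol n m α β η v) (hn : (n : ℝ) ≠ 1) (hm : m ≠ 0)
    (hr : 0 < r) :
    r ^ 2 * deriv (deriv v) r / v r =
      (1 - m) * logSlope v r ^ 2 - (n - 1) * logSlope v r
        - fowlerProfile m v r * (α + β * logSlope v r) / (n - 1) := by
  have hvr := hv.pos hr.le
  have hvC2 := hv.contDiffAt hr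
  have hpow : v r ^ m ≠ 0 := (rpow_pos_of_pos hvr m).ne'
  have hn' : (n : ℝ) - 1 ≠ 0 := sub_ne_zero.2 hn
  have hode := hv.2.2.2.2.2 r hr
  rw [deriv_deriv_rpow_const m hvC2 hvr.ne',
    deriv_rpow_const (hvC2.differentiableAt (by norm_num)) (Or.inl hvr.ne'),
    rpow_sub hvr, rpow_sub hvr, rpow_one, rpow_two] at hode
  rw [logSlope, fowlerProfile, rpow_sub hvr, rpow_one]
  field_simp at hode ⊢
  linear_combination hode

theorem hasDerivAt_logSlope (hv : IsRadialSol n m α β η v) (hn : (n : ℝ) ≠ 1) (hm : m ≠ 0)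
    (hr : 0 < r) :
    HasDerivAt (logSlope v)
      ((-m * logSlope v r ^ 2 - (n - 2) * logSlope v r
        - fowlerProfile m v r * (α + β * logSlope v r) / (n - 1)) / r) r := by
  refine (_root_.hasDerivAt_logSlope (hv.contDiffAt hr) hr.ne' (hv.pos hr.le).ne').congr_deriv ?_
  rw [hv.sq_mul_deriv_deriv_div hn hm hr]
  ring

theorem hasDerivAt_fowlerProfile (hv : IsRadialSol n m α β η v) (hr : 0 < r) :
    HasDerivAt (fowlerProfile m v)
      (fowlerProfile m v r * (2 + (1 - m) * logSlope v r) / r) r :=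
  _root_.hasDerivAt_fowlerProfile m ((hv.contDiffAt hr).differentiableAt (by norm_num)) hr.ne'
    (hv.pos hr.le).ne'

theorem mul_deriv_fowlerProfile (hv : IsRadialSol n m α β η v) (hr : 0 < r) :
    r * deriv (fowlerProfile m v) r = fowlerProfile m v r * (2 + (1 - m) * logSlope v r) := by
  rw [(hv.hasDerivAt_fowlerProfile hr).deriv, mul_div_cancel₀ _ hr.ne']

theorem fowlerProfile_pos (hv : IsRadialSol n m α β η v) (hr : 0 < r) :
    0 < fowlerProfile m v r :=
  mul_pos (pow_pos hr 2) (rpow_pos_of_pos (hv.pos hr.le) _)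

theorem isFowlerOrbit (hv : IsRadialSol n m α β η v) (hn : (n : ℝ) ≠ 1) (hm : m ≠ 0)
    (hm1 : m ≠ 1) (hα : α = 2 * β / (1 - m)) :
    IsFowlerOrbit (m / (1 - m)) (n - 2) (β / (n - 1)) (fun t ↦ fowlerProfile m v (exp t))
      (fun t ↦ 2 + (1 - m) * logSlope v (exp t)) where
  pos t := hv.fowlerProfile_pos (exp_pos t)
  hasDerivAt_fst t := by
    refine ((hv.hasDerivAt_fowlerProfile (exp_pos t)).comp t (hasDerivAt_exp t)).congr_deriv ?_
    rw [div_mul_cancel₀ _ (exp_ne_zero t)]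
  hasDerivAt_snd t := by
    refine ((((hv.hasDerivAt_logSlope hn hm (exp_pos t)).comp t
      (hasDerivAt_exp t)).const_mul (1 - m)).const_add 2).congr_deriv ?_
    have hm1' : 1 - m ≠ 0 := sub_ne_zero.2 hm1.symm
    have hn' : (n : ℝ) - 1 ≠ 0 := sub_ne_zero.2 hn
    rw [div_mul_cancel₀ _ (exp_ne_zero t), hα]
    field_simp
    ring

theorem tendsto_fowlerProfile_exp (hv : IsRadialSol n m α β η v) :
    Tendsto (fun t ↦ fowlerProfile m v (exp t) * exp (-(2 * t))) atBot (𝓝 (η ^ (1 - m))) := by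
  have hlim := tendsto_comp_exp_atBot.2
    (hv.tendsto_nhdsGT_zero.rpow_const (p := 1 - m) (Or.inl hv.eta_pos.ne'))
  refine hlim.congr fun t ↦ ?_
  rw [fowlerProfile, two_mul, exp_neg, exp_add]
  field_simp

end IsRadialSol

theorem stmt4_general (n : ℕ) (hn : 3 ≤ n) (m α β η : ℝ)
    (hm : m ≠ 0) (hm' : m < ((n : ℝ) - 2) / n)
    (hβ : 0 < β) (hα : α = 2 * β / (1 - m))
    (v : ℝ → ℝ) (hv : IsRadialSol n m α β η v)
    (w : ℝ → ℝ) (hw : ∀ r : ℝ, w r = r ^ 2 * v r ^ (1 - m)) :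
    (∃ C₁ > (0:ℝ), ∃ C₂ > (0:ℝ), ∃ C₃ > (0:ℝ),
      (∀ r : ℝ, 0 < r → r * deriv w r / w r ≤ C₁) ∧
      (∀ r : ℝ, 1 ≤ r → C₂ ≤ r * deriv w r ∧ r * deriv w r ≤ C₃)) ∧
    Tendsto w atTop atTop := by
  obtain rfl : w = fowlerProfile m v := funext hw
  have hn' : (3 : ℝ) ≤ n := by exact_mod_cast hn
  have hmn : m * n < n - 2 := (lt_div_iff₀ (by linarith)).1 hm'
  have hm1 : 0 < 1 - m := by nlinarith
  have hkN : 2 * (m / (1 - m)) < n - 2 := by rw [← mul_div_assoc, div_lt_iff₀ hm1]; linarith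
  have hb : 0 < β / ((n : ℝ) - 1) := div_pos hβ (by linarith)
  have horbit := hv.isFowlerOrbit (by linarith) hm (by linarith) hα
  have hw0 := tendsto_zero_of_tendsto_mul_exp_neg two_pos hv.tendsto_fowlerProfile_exp
  have hslope (t : ℝ) : 2 + (1 - m) * logSlope v (exp t) ∈ Ioc 0 2 :=
    ⟨horbit.snd_pos hkN hw0 t,
      horbit.snd_le_two (by linarith) hb.le (rpow_pos_of_pos hv.eta_pos _)
        hv.tendsto_fowlerProfile_exp t⟩
  obtain ⟨C₂, hC₂, hlower⟩ := horbit.exists_pos_le_flux hkN hb.le hslope 0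
  obtain ⟨C₃, hupper⟩ := horbit.exists_flux_le hb (fun t ↦ Ioc_subset_Icc_self (hslope t)) 0
  refine ⟨⟨2, two_pos, C₂, hC₂, C₃, hC₂.trans_le ((hlower 0 le_rfl).trans (hupper 0 le_rfl)),
    fun r hr ↦ ?_, fun r hr ↦ ?_⟩, tendsto_comp_exp_atTop.1 <|
      tendsto_atTop_of_le_deriv hC₂ (fun t _ ↦ horbit.hasDerivAt_fst t) hlower⟩
  · rw [hv.mul_deriv_fowlerProfile hr, mul_div_cancel_left₀ _ (hv.fowlerProfile_pos hr).ne']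
    exact exp_log hr ▸ (hslope (log r)).2
  · have hr0 : 0 < r := one_pos.trans_le hr
    rw [hv.mul_deriv_fowlerProfile hr0, ← exp_log hr0]
    exact ⟨hlower _ (log_nonneg hr), hupper _ (log_nonneg hr)⟩

theorem stmt4 (n : ℕ) (hn : 3 ≤ n) (m α β η : ℝ) (hη : 0 < η)
    (hm : 0 < m) (hm' : m < ((n : ℝ) - 2) / n)
    (hβ : 0 < β) (hα : α = 2 * β / (1 - m))
    (v : ℝ → ℝ) (hv : IsRadialSol n m α β η v)
    (w : ℝ → ℝ) (hw : ∀ r : ℝ, w r = r ^ 2 * v r ^ (1 - m)) :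
    (∃ C₁ > (0:ℝ), ∃ C₂ > (0:ℝ), ∃ C₃ > (0:ℝ),
      (∀ r : ℝ, 0 < r → r * deriv w r / w r ≤ C₁) ∧
      (∀ r : ℝ, 1 ≤ r → C₂ ≤ r * deriv w r ∧ r * deriv w r ≤ C₃)) ∧
    Tendsto w atTop atTop := by
  exact stmt4_general n hn m α β η hm.ne' hm' hβ hα v hv w hw
end

section
/- Let n ≥ 3 be an integer, let η > 0, and let m, α, β satisfy 0 < m < (n−2)/n, β > 0, and α = 2β/(1−m). Let v be a radial solution of (E) on [0,∞). Then lim_{r→∞} r²·v(r)^{1−m} / log r = 2(n−1)(n−2−nm) / (β(1−m)). -/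
open Real Set Filter

/-!
In the variable `t = log r`, the Emden–Fowler quantities `w = r² v^(1-m)` and
`h = 2 / (1 - m) + r v' / v` solve the autonomous system
`w' = (1 - m) w h`, `h' = K - b h - m h² - C w h` with constants `b`, `K > 0` and
`C = β / (n - 1)`.
Since `w → 0` as `t → -∞`, `h` can never become negative, so `w` is monotone. If `w` were bounded,
then `h' ≈ K > 0` for small `h` would keep `h`, hence `w' / w`, away from `0`; so `w → ∞`.
The coefficient `C w` then acts as an ever stronger friction: it forces first `h / w → 0`, which
makes the quadratic term negligible, then `h → 0`, and finally `w h → K / C`.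
Hence `w' → (1 - m) K / C`, and `w / t` has the same limit.
-/

open scoped Topology

/-! ### Differential inequalities on a half-line -/

section HalfLine

variable {f f' : ℝ → ℝ}

theorem le_of_hasDerivAt_pos_of_eq {a x : ℝ} (hf : ∀ t, a ≤ t → HasDerivAt f (f' t) t)
    (ha : x ≤ f a) (hpos : ∀ t, a ≤ t → f t = x → 0 < f' t) {t : ℝ} (ht : a ≤ t) : x ≤ f t := by
  have hneg : -f t ≤ -x :=
    image_le_of_deriv_right_lt_deriv_boundary (f := fun s ↦ -f s) (f' := fun s ↦ -f' s)
      (B := fun _ ↦ -x) (B' := fun _ ↦ 0)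
      (fun s hs ↦ (hf s hs.1).neg.continuousAt.continuousWithinAt)
      (fun s hs ↦ (hf s hs.1).neg.hasDerivWithinAt) (neg_le_neg ha)
      (fun s ↦ hasDerivAt_const s _)
      (fun s hs heq ↦ neg_lt_zero.2 (hpos s hs.1 (neg_injective heq))) ⟨ht, le_rfl⟩
  exact neg_le_neg_iff.1 hneg

theorem add_mul_sub_le_of_le_hasDerivAt {a ε : ℝ} (hf : ∀ t, a ≤ t → HasDerivAt f (f' t) t)
    (hε : ∀ t, a ≤ t → ε ≤ f' t) {t : ℝ} (ht : a ≤ t) : f a + ε * (t - a) ≤ f t := by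
  have hslope : ε * (t - a) ≤ f t - f a :=
    (convex_Ici a).mul_sub_le_image_sub_of_le_deriv
      (fun s hs ↦ (hf s hs).continuousAt.continuousWithinAt)
      (fun s hs ↦ (hf s (interior_subset hs)).differentiableAt.differentiableWithinAt)
      (fun s hs ↦ (hε s (interior_subset hs)).trans_eq (hf s (interior_subset hs)).deriv.symm)
      a self_mem_Ici t ht ht
  linarith

theorem eventually_le_of_le_hasDerivAt_of_le {x ε : ℝ} (hε : 0 < ε)
    (hf : ∀ᶠ t in atTop, HasDerivAt f (f' t) t) (hf' : ∀ᶠ t in atTop, f t ≤ x → ε ≤ f' t) :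
    ∀ᶠ t in atTop, x ≤ f t := by
  obtain ⟨a, ha⟩ := eventually_atTop.1 (hf.and hf')
  obtain ⟨b, hab, hb⟩ : ∃ b, a ≤ b ∧ x ≤ f b := by
    by_contra! hlt
    have hgrowth {t : ℝ} (ht : a ≤ t) : f a + ε * (t - a) ≤ f t :=
      add_mul_sub_le_of_le_hasDerivAt (fun s hs ↦ (ha s hs).1)
        (fun s hs ↦ (ha s hs).2 (hlt s hs).le) ht
    have hgap : 0 ≤ (x - f a) / ε := div_nonneg (sub_nonneg.2 (hlt a le_rfl).le) hε.le
    have hreach := hgrowth (le_add_of_nonneg_right hgap)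
    rw [add_sub_cancel_left, mul_div_cancel₀ _ hε.ne', add_sub_cancel] at hreach
    exact (hlt _ (le_add_of_nonneg_right hgap)).not_ge hreach
  filter_upwards [eventually_ge_atTop b] with t ht
  exact le_of_hasDerivAt_pos_of_eq (fun s hs ↦ (ha s (hab.trans hs)).1) hb
    (fun s hs heq ↦ hε.trans_le ((ha s (hab.trans hs)).2 heq.le)) ht

end HalfLine

/-! ### Linear relaxation -/

section Relaxation

variable {f M e A : ℝ → ℝ} {c x l a : ℝ}

theorem eventually_lt_of_relaxation (hc : 0 < c) (hM : ∀ᶠ t in atTop, c ≤ M t)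
    (hf : ∀ᶠ t in atTop, HasDerivAt f (M t * (e t - f t)) t) (he : Tendsto e atTop (𝓝 l))
    (hx : x < l) : ∀ᶠ t in atTop, x < f t := by
  obtain ⟨y, hxy, hyl⟩ := exists_between hx
  obtain ⟨z, hyz, hzl⟩ := exists_between hyl
  have hge : ∀ᶠ t in atTop, y ≤ f t := by
    refine eventually_le_of_le_hasDerivAt_of_le (mul_pos hc (sub_pos.2 hyz)) hf ?_
    filter_upwards [hM, he.eventually_const_le hzl] with t hMt het hft
    have : z - y ≤ e t - f t := by linarith
    have : 0 ≤ z - y := by linarith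
    gcongr
    linarith
  exact hge.mono fun t ↦ hxy.trans_le

theorem tendsto_of_relaxation (hc : 0 < c) (hM : ∀ᶠ t in atTop, c ≤ M t)
    (hf : ∀ᶠ t in atTop, HasDerivAt f (M t * (e t - f t)) t) (he : Tendsto e atTop (𝓝 l)) :
    Tendsto f atTop (𝓝 l) := by
  refine tendsto_order.2 ⟨fun x hx ↦ eventually_lt_of_relaxation hc hM hf he hx, fun x hx ↦ ?_⟩
  have hneg : ∀ᶠ t in atTop, HasDerivAt (fun s ↦ -f s) (M t * (-e t - -f t)) t :=
    hf.mono fun t ht ↦ ht.fun_neg.congr_deriv (by ring)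
  exact (eventually_lt_of_relaxation hc hM hneg he.neg (neg_lt_neg hx)).mono
    fun t ↦ neg_lt_neg_iff.1

theorem tendsto_zero_of_hasDerivAt_sub_mul (hM : Tendsto M atTop atTop)
    (hA : Tendsto A atTop (𝓝 a)) (hf : ∀ᶠ t in atTop, HasDerivAt f (A t - M t * f t) t) :
    Tendsto f atTop (𝓝 0) := by
  refine tendsto_of_relaxation one_pos (hM.eventually_ge_atTop 1) ?_ (hA.div_atTop hM)
  filter_upwards [hf, hM.eventually_gt_atTop 0] with t ht hMt
  exact ht.congr_deriv (by field_simp)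

-- `u s = f (exp s) / exp s` relaxes to the slope: `u' s = f' (exp s) - u s`.
theorem tendsto_div_id_of_tendsto_hasDerivAt {f f' : ℝ → ℝ}
    (hf : ∀ᶠ t in atTop, HasDerivAt f (f' t) t) (hf' : Tendsto f' atTop (𝓝 l)) :
    Tendsto (fun t ↦ f t / t) atTop (𝓝 l) := by
  have hexp : Tendsto (fun s ↦ f (exp s) / exp s) atTop (𝓝 l) := by
    refine tendsto_of_relaxation (M := fun _ ↦ 1) one_pos (.of_forall fun _ ↦ le_rfl) ?_
      (hf'.comp tendsto_exp_atTop)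
    filter_upwards [tendsto_exp_atTop.eventually hf] with s hs
    refine ((hs.comp s (Real.hasDerivAt_exp s)).fun_div (Real.hasDerivAt_exp s)
      (exp_ne_zero s)).congr_deriv ?_
    simp only [Function.comp_apply]
    field_simp
  refine (hexp.comp tendsto_log_atTop).congr' ?_
  filter_upwards [eventually_gt_atTop 0] with t ht
  simp only [Function.comp_apply, exp_log ht]

end Relaxation

/-! ### The Emden–Fowler system -/

/-- A global orbit, in the half-plane `w > 0`, of the planar system satisfied by the Emden–Fowler
variables `w = r² v^(1-m)` and `h = w' / (q w)` of the radial equation. -/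
structure IsEmdenFowlerOrbit (q K b p C : ℝ) (w h : ℝ → ℝ) : Prop where
  pos : ∀ t, 0 < w t
  hasDerivAt_profile : ∀ t, HasDerivAt w (q * w t * h t) t
  hasDerivAt_slope : ∀ t, HasDerivAt h (K - b * h t - p * h t ^ 2 - C * w t * h t) t

namespace IsEmdenFowlerOrbit

variable {q K b p C : ℝ} {w h : ℝ → ℝ}

theorem slope_nonneg (H : IsEmdenFowlerOrbit q K b p C w h) (hq : 0 ≤ q) (hK : 0 < K)
    (hbot : Tendsto w atBot (𝓝 0)) (t : ℝ) : 0 ≤ h t := by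
  by_contra! hneg
  have hneg_past (s : ℝ) (hs : s ≤ t) : h s < 0 := by
    by_contra! hnonneg
    exact hneg.not_ge <| le_of_hasDerivAt_pos_of_eq (fun x _ ↦ H.hasDerivAt_slope x) hnonneg
      (fun x _ hx ↦ by simpa [hx] using hK) hs
  have hanti : AntitoneOn w (Iic t) := by
    refine antitoneOn_of_deriv_nonpos (convex_Iic t)
      (fun x _ ↦ (H.hasDerivAt_profile x).continuousAt.continuousWithinAt)
      (fun x _ ↦ (H.hasDerivAt_profile x).differentiableAt.differentiableWithinAt) fun x hx ↦ ?_
    rw [(H.hasDerivAt_profile x).deriv]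
    exact mul_nonpos_of_nonneg_of_nonpos (mul_nonneg hq (H.pos x).le)
      (hneg_past x (interior_subset hx : x ∈ Iic t)).le
  have hle : w t ≤ 0 :=
    ge_of_tendsto hbot ((eventually_le_atBot t).mono fun s hs ↦ hanti hs self_mem_Iic hs)
  exact (H.pos t).not_ge hle

theorem monotone_profile (H : IsEmdenFowlerOrbit q K b p C w h) (hq : 0 ≤ q)
    (hh : ∀ t, 0 ≤ h t) : Monotone w := by
  refine monotone_of_deriv_nonneg (fun t ↦ (H.hasDerivAt_profile t).differentiableAt) fun t ↦ ?_
  rw [(H.hasDerivAt_profile t).deriv]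
  exact mul_nonneg (mul_nonneg hq (H.pos t).le) (hh t)

theorem exists_pos_eventually_le_slope (H : IsEmdenFowlerOrbit q K b p C w h) (hK : 0 < K)
    (hh : ∀ t, 0 ≤ h t) {L : ℝ} (hL : ∀ t, w t ≤ L) : ∃ δ > 0, ∀ᶠ t in atTop, δ ≤ h t := by
  have hL0 : 0 ≤ L := (H.pos 0).le.trans (hL 0)
  let B := 1 + |b| + |p| + |C| * L
  refine ⟨min 1 (K / (2 * B)), by positivity,
    eventually_le_of_le_hasDerivAt_of_le (half_pos hK) (.of_forall H.hasDerivAt_slope)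
      (.of_forall fun t ht ↦ ?_)⟩
  obtain ⟨h_le_one, h_le⟩ := le_min_iff.1 ht
  have hBh : B * h t ≤ K / 2 := by
    rw [le_div_iff₀ (by positivity)] at h_le
    linarith
  have hb : b * h t ≤ |b| * h t := mul_le_mul_of_nonneg_right (le_abs_self b) (hh t)
  have hp : p * h t ^ 2 ≤ |p| * h t :=
    mul_le_mul (le_abs_self p) (pow_le_of_le_one (hh t) h_le_one two_ne_zero) (sq_nonneg _)
      (abs_nonneg p)
  have hC : C * w t * h t ≤ |C| * L * h t :=
    mul_le_mul_of_nonneg_right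
      (mul_le_mul (le_abs_self C) (hL t) (H.pos t).le (abs_nonneg C)) (hh t)
  linarith [hh t]

theorem tendsto_profile_atTop (H : IsEmdenFowlerOrbit q K b p C w h) (hq : 0 < q) (hK : 0 < K)
    (hh : ∀ t, 0 ≤ h t) : Tendsto w atTop atTop := by
  have hmono := H.monotone_profile hq.le hh
  refine tendsto_atTop.2 fun L ↦ ?_
  by_cases hL : ∃ t, L ≤ w t
  · obtain ⟨t, ht⟩ := hL
    exact (eventually_ge_atTop t).mono fun s hs ↦ ht.trans (hmono hs)
  push Not at hL
  obtain ⟨δ, hδ, hδh⟩ := H.exists_pos_eventually_le_slope hK hh fun t ↦ (hL t).le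
  have hw0 := H.pos 0
  refine eventually_le_of_le_hasDerivAt_of_le (ε := q * w 0 * δ) (by positivity)
    (.of_forall H.hasDerivAt_profile) ?_
  filter_upwards [hδh, eventually_ge_atTop 0] with t hδt ht _
  have hwt := H.pos t
  have := hmono ht
  gcongr

theorem tendsto_slope_div_profile (H : IsEmdenFowlerOrbit q K b p C w h) (hC : 0 < C)
    (hpq : 0 ≤ p + q) (hh : ∀ t, 0 ≤ h t) (hw : Tendsto w atTop atTop) :
    Tendsto (fun t ↦ h t / w t) atTop (𝓝 0) := by
  have hfriction : Tendsto (fun t ↦ b + (C * w t + (p + q) * h t)) atTop atTop :=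
    tendsto_atTop_add_const_left _ _ <|
      tendsto_atTop_mono (fun t ↦ le_add_of_nonneg_right (mul_nonneg hpq (hh t)))
        (hw.const_mul_atTop hC)
  refine tendsto_zero_of_hasDerivAt_sub_mul hfriction (hw.const_div_atTop K)
    (.of_forall fun t ↦ ?_)
  have hwt := (H.pos t).ne'
  exact ((H.hasDerivAt_slope t).fun_div (H.hasDerivAt_profile t) hwt).congr_deriv
    (by field_simp; ring)

theorem tendsto_slope_zero (H : IsEmdenFowlerOrbit q K b p C w h) (hC : 0 < C)
    (hw : Tendsto w atTop atTop) (hk : Tendsto (fun t ↦ h t / w t) atTop (𝓝 0)) :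
    Tendsto h atTop (𝓝 0) := by
  have hcoeff : Tendsto (fun t ↦ p * (h t / w t) + C) atTop (𝓝 C) := by
    simpa using (hk.const_mul p).add_const C
  have hfriction : Tendsto (fun t ↦ b + (p * (h t / w t) + C) * w t) atTop atTop :=
    tendsto_atTop_add_const_left _ _ (hcoeff.pos_mul_atTop hC hw)
  refine tendsto_zero_of_hasDerivAt_sub_mul hfriction tendsto_const_nhds (a := K)
    (.of_forall fun t ↦ ?_)
  have hwt := (H.pos t).ne'
  exact (H.hasDerivAt_slope t).congr_deriv (by field_simp; ring)

theorem tendsto_profile_mul_slope (H : IsEmdenFowlerOrbit q K b p C w h) (hC : 0 < C)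
    (hw : Tendsto w atTop atTop) (hh : Tendsto h atTop (𝓝 0)) :
    Tendsto (fun t ↦ w t * h t) atTop (𝓝 (K / C)) := by
  have htarget : Tendsto (fun t ↦ (K - b * h t + (q - p) * h t ^ 2) / C) atTop (𝓝 (K / C)) := by
    simpa using
      (((hh.const_mul b).const_sub K).add ((hh.pow 2).const_mul (q - p))).div_const C
  refine tendsto_of_relaxation one_pos ((hw.const_mul_atTop hC).eventually_ge_atTop 1)
    (.of_forall fun t ↦ ?_) htarget
  exact ((H.hasDerivAt_profile t).fun_mul (H.hasDerivAt_slope t)).congr_deriv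
    (by field_simp; ring)

theorem tendsto_profile_div_id (H : IsEmdenFowlerOrbit q K b p C w h) (hq : 0 < q) (hK : 0 < K)
    (hC : 0 < C) (hpq : 0 ≤ p + q) (hbot : Tendsto w atBot (𝓝 0)) :
    Tendsto (fun t ↦ w t / t) atTop (𝓝 (q * (K / C))) := by
  have hh := H.slope_nonneg hq.le hK hbot
  have hw := H.tendsto_profile_atTop hq hK hh
  have hslope := H.tendsto_slope_zero hC hw (H.tendsto_slope_div_profile hC hpq hh hw)
  refine tendsto_div_id_of_tendsto_hasDerivAt (.of_forall H.hasDerivAt_profile) ?_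
  simpa only [mul_assoc] using (H.tendsto_profile_mul_slope hC hw hslope).const_mul q

end IsEmdenFowlerOrbit

/-! ### Logarithmic derivatives -/

theorem hasDerivAt_logDeriv {𝕜 𝕜' : Type*} [NontriviallyNormedField 𝕜]
    [NontriviallyNormedField 𝕜'] [NormedAlgebra 𝕜 𝕜'] {f : 𝕜 → 𝕜'} {x : 𝕜}
    (hf : DifferentiableAt 𝕜 f x) (hf' : DifferentiableAt 𝕜 (deriv f) x) (hx : f x ≠ 0) :
    HasDerivAt (logDeriv f) (deriv (deriv f) x / f x - logDeriv f x ^ 2) x := by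
  refine (hf'.hasDerivAt.div hf.hasDerivAt hx).congr_deriv ?_
  rw [logDeriv_apply]
  field_simp

theorem logDeriv_rpow_const {f : ℝ → ℝ} {x : ℝ} (hf : DifferentiableAt ℝ f x) (hx : 0 < f x)
    (p : ℝ) : logDeriv (fun y ↦ f y ^ p) x = p * logDeriv f x := by
  rw [logDeriv_apply, logDeriv_apply, (hf.hasDerivAt.rpow_const (.inl hx.ne')).deriv,
    rpow_sub_one hx.ne']
  field_simp

theorem hasDerivAt_logDeriv_of_rpow {f : ℝ → ℝ} {x p : ℝ} (hf : ContDiffAt ℝ 2 f x)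
    (hx : 0 < f x) (hp : p ≠ 0) :
    HasDerivAt (logDeriv f)
      (deriv (deriv fun y ↦ f y ^ p) x / (p * f x ^ p) - p * logDeriv f x ^ 2) x := by
  have hpow : ContDiffAt ℝ 2 (fun y ↦ f y ^ p) x := hf.rpow_const_of_ne hx.ne'
  have hlog : ∀ᶠ y in 𝓝 x, logDeriv (fun y ↦ f y ^ p) y = p * logDeriv f y := by
    filter_upwards [hf.eventually (by simp), hf.continuousAt.eventually_const_lt hx] with y hy hy'
    exact logDeriv_rpow_const (hy.differentiableAt two_ne_zero) hy' p
  have hderiv := hasDerivAt_logDeriv (hpow.differentiableAt two_ne_zero)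
    ((hpow.derivWithin (m := 1) le_rfl).differentiableAt one_ne_zero) (rpow_pos_of_pos hx p).ne'
  rw [hlog.self_of_nhds] at hderiv
  refine ((hderiv.const_mul p⁻¹).congr_of_eventuallyEq ?_).congr_deriv (by field_simp)
  filter_upwards [hlog] with y hy
  rw [hy, inv_mul_cancel_left₀ hp]

/-! ### The radial equation -/

/-- The radial equation `(E)` at the radius `r`, for a real dimension `N`. -/
def SolvesRadialEquationAt (N m α β : ℝ) (v : ℝ → ℝ) (r : ℝ) : Prop :=
  ((N - 1) / m) * (deriv (deriv (fun s ↦ v s ^ m)) r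
    + ((N - 1) / r) * deriv (fun s ↦ v s ^ m) r) + α * v r + β * r * deriv v r = 0

/-- The Emden–Fowler profile `w = r² v(r)^(1-m)` as a function of `t = log r`. -/
noncomputable def emdenProfile (m : ℝ) (v : ℝ → ℝ) (t : ℝ) : ℝ :=
  exp t ^ 2 * v (exp t) ^ (1 - m)

/-- The slope `2 / (1 - m) + r v'(r) / v(r)` as a function of `t = log r`; it measures how far `v`
is from the scale-invariant decay `r ^ (-2 / (1 - m))`. -/
noncomputable def emdenSlope (m : ℝ) (v : ℝ → ℝ) (t : ℝ) : ℝ :=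
  2 / (1 - m) + exp t * logDeriv v (exp t)

section RadialEquation

variable {N m α β : ℝ} {v : ℝ → ℝ}

theorem SolvesRadialEquationAt.hasDerivAt_logDeriv {r : ℝ}
    (hode : SolvesRadialEquationAt N m α β v r) (hm : m ≠ 0) (hN : N ≠ 1) (hpos : 0 < v r)
    (hv : ContDiffAt ℝ 2 v r) :
    HasDerivAt (logDeriv v) (-(m * logDeriv v r ^ 2 + (N - 1) / r * logDeriv v r
      + v r ^ (1 - m) * (α + β * r * logDeriv v r) / (N - 1))) r := by
  have hderiv_rpow : deriv (fun s ↦ v s ^ m) r = v r ^ m * (m * logDeriv v r) := by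
    rw [← logDeriv_rpow_const (hv.differentiableAt two_ne_zero) hpos m, logDeriv_apply,
      mul_div_cancel₀ _ (rpow_pos_of_pos hpos m).ne']
  have hderiv : deriv v r = v r * logDeriv v r := by
    rw [logDeriv_apply, mul_div_cancel₀ _ hpos.ne']
  have hsplit : v r = v r ^ m * v r ^ (1 - m) := by
    rw [← rpow_add hpos, add_sub_cancel, rpow_one]
  have hN' : N - 1 ≠ 0 := sub_ne_zero.2 hN
  have hderiv_deriv_rpow : deriv (deriv fun s ↦ v s ^ m) r
      = -(m * v r ^ m * ((N - 1) / r * logDeriv v r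
        + v r ^ (1 - m) * (α + β * r * logDeriv v r) / (N - 1))) := by
    rw [SolvesRadialEquationAt, hderiv_rpow, hderiv] at hode
    field_simp at hode ⊢
    linear_combination hode - m * (α + β * r * logDeriv v r) * hsplit
  refine (hasDerivAt_logDeriv_of_rpow hv hpos hm).congr_deriv ?_
  rw [hderiv_deriv_rpow]
  field_simp
  ring

theorem hasDerivAt_emdenProfile (hm : m ≠ 1) {t : ℝ} (hpos : 0 < v (exp t))
    (hv : DifferentiableAt ℝ v (exp t)) :
    HasDerivAt (emdenProfile m v) ((1 - m) * emdenProfile m v t * emdenSlope m v t) t := by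
  have hm' : 1 - m ≠ 0 := sub_ne_zero.2 hm.symm
  have hpow := (hv.hasDerivAt.rpow_const (p := 1 - m) (.inl hpos.ne')).comp t
    (Real.hasDerivAt_exp t)
  refine (((Real.hasDerivAt_exp t).fun_pow 2).fun_mul hpow).congr_deriv ?_
  simp only [emdenProfile, emdenSlope, logDeriv_apply, Function.comp_apply,
    rpow_sub_one hpos.ne']
  field_simp
  ring

theorem SolvesRadialEquationAt.hasDerivAt_emdenSlope {t : ℝ}
    (hode : SolvesRadialEquationAt N m (2 * β / (1 - m)) β v (exp t)) (hm : m ≠ 0) (hm1 : m ≠ 1)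
    (hN : N ≠ 1) (hpos : 0 < v (exp t)) (hv : ContDiffAt ℝ 2 v (exp t)) :
    HasDerivAt (emdenSlope m v)
      (2 * (N - 2 - N * m) / (1 - m) ^ 2 - (N - 2 - 4 * m / (1 - m)) * emdenSlope m v t
        - m * emdenSlope m v t ^ 2
        - β / (N - 1) * emdenProfile m v t * emdenSlope m v t) t := by
  have hm' : 1 - m ≠ 0 := sub_ne_zero.2 hm1.symm
  have hN' : N - 1 ≠ 0 := sub_ne_zero.2 hN
  have hlog := (hode.hasDerivAt_logDeriv hm hN hpos hv).comp t (Real.hasDerivAt_exp t)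
  refine (((Real.hasDerivAt_exp t).fun_mul hlog).const_add (2 / (1 - m))).congr_deriv ?_
  simp only [emdenProfile, emdenSlope, Function.comp_apply]
  field_simp
  ring

theorem isEmdenFowlerOrbit_of_solvesRadialEquationAt (hm : m ≠ 0) (hm1 : m ≠ 1) (hN : N ≠ 1)
    (hpos : ∀ r, 0 < r → 0 < v r) (hv : ContDiffOn ℝ 2 v (Ioi 0))
    (hode : ∀ r, 0 < r → SolvesRadialEquationAt N m (2 * β / (1 - m)) β v r) :
    IsEmdenFowlerOrbit (1 - m) (2 * (N - 2 - N * m) / (1 - m) ^ 2) (N - 2 - 4 * m / (1 - m)) m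
      (β / (N - 1)) (emdenProfile m v) (emdenSlope m v) := by
  have hvAt (t : ℝ) : ContDiffAt ℝ 2 v (exp t) := hv.contDiffAt (Ioi_mem_nhds (exp_pos t))
  exact
    { pos t := mul_pos (pow_pos (exp_pos t) 2) (rpow_pos_of_pos (hpos _ (exp_pos t)) _)
      hasDerivAt_profile t :=
        hasDerivAt_emdenProfile hm1 (hpos _ (exp_pos t)) ((hvAt t).differentiableAt two_ne_zero)
      hasDerivAt_slope t :=
        (hode _ (exp_pos t)).hasDerivAt_emdenSlope hm hm1 hN (hpos _ (exp_pos t)) (hvAt t) }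

end RadialEquation

theorem stmt5_general {N m α β : ℝ} (hN : 1 < N) (hm : m ≠ 0) (hm_lt : m < (N - 2) / N)
    (hβ : 0 < β) (hα : α = 2 * β / (1 - m)) {v : ℝ → ℝ} (hpos : ∀ r, 0 < r → 0 < v r)
    (hv : ContDiffOn ℝ 2 v (Ioi 0)) (hode : ∀ r, 0 < r → SolvesRadialEquationAt N m α β v r)
    (hzero : Tendsto (fun r ↦ r ^ 2 * v r ^ (1 - m)) (𝓝[>] 0) (𝓝 0)) :
    Tendsto (fun r ↦ r ^ 2 * v r ^ (1 - m) / log r) atTop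
      (𝓝 (2 * (N - 1) * (N - 2 - N * m) / (β * (1 - m)))) := by
  subst hα
  have hN' : 0 < N - 1 := sub_pos.2 hN
  have hN0 : 0 < N := one_pos.trans hN
  have hm1 : m < 1 := hm_lt.trans ((div_lt_one hN0).2 (sub_lt_self N two_pos))
  have hm' : 0 < 1 - m := sub_pos.2 hm1
  have hK : 0 < 2 * (N - 2 - N * m) / (1 - m) ^ 2 :=
    div_pos (mul_pos two_pos (sub_pos.2 ((lt_div_iff₀' hN0).1 hm_lt))) (pow_pos hm' 2)
  have hlim := (isEmdenFowlerOrbit_of_solvesRadialEquationAt hm hm1.ne hN.ne' hpos hv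
    hode).tendsto_profile_div_id hm' hK (div_pos hβ hN') (by simp)
    (hzero.comp tendsto_exp_atBot_nhdsGT)
  have hconst : (1 - m) * (2 * (N - 2 - N * m) / (1 - m) ^ 2 / (β / (N - 1)))
      = 2 * (N - 1) * (N - 2 - N * m) / (β * (1 - m)) := by
    field_simp
  rw [hconst] at hlim
  refine (hlim.comp tendsto_log_atTop).congr' ?_
  filter_upwards [eventually_gt_atTop 0] with r hr
  simp only [Function.comp_apply, emdenProfile, exp_log hr]

theorem IsRadialSol.tendsto_sq_mul_rpow_zero {n : ℕ} {m α β η : ℝ} {v : ℝ → ℝ}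
    (hv : IsRadialSol n m α β η v) :
    Tendsto (fun r ↦ r ^ 2 * v r ^ (1 - m)) (𝓝[>] 0) (𝓝 0) := by
  obtain ⟨hpos, hcont, -⟩ := hv
  have hv0 : Tendsto v (𝓝[>] 0) (𝓝 (v 0)) :=
    (hcont 0 self_mem_Ici).mono_left (nhdsWithin_mono 0 Ioi_subset_Ici_self)
  have hid : Tendsto (fun r : ℝ ↦ r) (𝓝[>] 0) (𝓝 0) := tendsto_id.mono_left nhdsWithin_le_nhds
  simpa using
    (hid.pow 2).mul (hv0.rpow_const (p := 1 - m) (.inl (hpos 0 self_mem_Ici).ne'))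

theorem stmt5 (n : ℕ) (hn : 3 ≤ n) (m α β η : ℝ) (hη : 0 < η)
    (hm : 0 < m) (hm' : m < ((n : ℝ) - 2) / n)
    (hβ : 0 < β) (hα : α = 2 * β / (1 - m))
    (v : ℝ → ℝ) (hv : IsRadialSol n m α β η v) :
    Tendsto (fun r : ℝ => r ^ 2 * v r ^ (1 - m) / Real.log r) atTop
      (nhds (2 * ((n : ℝ) - 1) * ((n : ℝ) - 2 - n * m) / (β * (1 - m)))) :=
  stmt5_general (by exact_mod_cast (by lia : 1 < n)) hm.ne' hm' hβ hα (fun r hr ↦ hv.1 r hr.le)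
    hv.2.2.1 hv.2.2.2.2.2 hv.tendsto_sq_mul_rpow_zero
end

section
/- Let n ≥ 3 be an integer, let η > 0, let m = (n−2)/(n+2), let β > 0, and let α = 2β/(1−m) (equivalently α = (n+2)β/2). Let v be a radial solution of (E) on [0,∞). Then lim_{r→∞} r²·v(r)^{1−m} / log r = (n−1)(n−2)/β. (This gives the exact decay rate of a radially symmetric locally conformally flat gradient steady Yamabe soliton metric g = v^{4/(n+2)}·dx² on ℝⁿ.) -/
open Real Set Filter

/-!
In the variable `s = log r`, the pair `q = r² v^(1-m)`, `y = q'/q = 2 + (1-m) r v'/v` solves the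
autonomous system `q' = q y`, `y' = A - B y - C y² - b q y` with `A, b > 0` and `C ≥ 0`. If `q`
increases somewhere then `y > 0` there, and `y` stays nonnegative since `y' = A > 0` wherever
`y = 0`; moreover `y` cannot decay while `q` is bounded, so `q → ∞`.
The rest is relaxation: a solution of `h' = P (g - h)` with `P ≥ δ > 0` follows the limit of `g`.
Applied to `y` this gives `y → 0`, applied to `q y = q'` it gives `q' → A / b`, and applied to the
averages `q(eᵗ) / eᵗ` it gives `q / s → A / b`.
-/

open Topology

section Relaxation

variable {h h' P g : ℝ → ℝ} {a δ l : ℝ}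

lemma le_of_hasDerivAt_of_pos_of_eq {s₀ s : ℝ} (hd : ∀ t, s₀ ≤ t → HasDerivAt h (h' t) t)
    (h₀ : a ≤ h s₀) (hpos : ∀ t, s₀ ≤ t → h t = a → 0 < h' t) (hs : s₀ ≤ s) : a ≤ h s :=
  image_le_of_deriv_right_lt_deriv_boundary' continuousOn_const
    (fun t _ => hasDerivWithinAt_const t _ a) h₀
    (fun t ht => (hd t ht.1).continuousAt.continuousWithinAt)
    (fun t ht => (hd t ht.1).hasDerivWithinAt)
    (fun t ht hat => hpos t ht.1 hat.symm) ⟨hs, le_rfl⟩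

lemma exists_ge_le_of_le_hasDerivAt (hδ : 0 < δ) {s₀ : ℝ}
    (hd : ∀ t, s₀ ≤ t → HasDerivAt h (h' t) t) (hle : ∀ t, s₀ ≤ t → h t ≤ a → δ ≤ h' t) :
    ∃ s, s₀ ≤ s ∧ a ≤ h s := by
  by_contra! hlt
  have growth := (convex_Ici s₀).mul_sub_le_image_sub_of_le_deriv (f := h) (C := δ)
    (fun t ht => (hd t ht).continuousAt.continuousWithinAt)
    (fun t ht => (hd t (interior_subset ht)).differentiableAt.differentiableWithinAt)
    (fun t ht => by
      have ht' := interior_subset ht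
      exact (hd t ht').deriv ▸ hle t ht' (hlt t ht').le)
  set s := s₀ + (a - h s₀) / δ with hs_def
  have hs : s₀ ≤ s := le_add_of_nonneg_right (div_nonneg (sub_nonneg.2 (hlt s₀ le_rfl).le) hδ.le)
  have hδs : δ * (s - s₀) = a - h s₀ := by rw [hs_def]; field_simp; ring
  linarith [growth s₀ self_mem_Ici s hs hs, hlt s hs]

lemma eventually_le_of_le_hasDerivAt (hδ : 0 < δ) (hd : ∀ᶠ t in atTop, HasDerivAt h (h' t) t)
    (hle : ∀ᶠ t in atTop, h t ≤ a → δ ≤ h' t) : ∀ᶠ t in atTop, a ≤ h t := by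
  obtain ⟨S, hS⟩ := eventually_atTop.1 (hd.and hle)
  obtain ⟨s₁, hSs₁, has₁⟩ :=
    exists_ge_le_of_le_hasDerivAt hδ (fun t ht => (hS t ht).1) (fun t ht => (hS t ht).2)
  filter_upwards [eventually_ge_atTop s₁] with s hs
  exact le_of_hasDerivAt_of_pos_of_eq (fun t ht => (hS t (hSs₁.trans ht)).1) has₁
    (fun t ht hat => hδ.trans_le ((hS t (hSs₁.trans ht)).2 hat.le)) hs

lemma eventually_lt_of_hasDerivAt_mul_sub (hδ : 0 < δ)
    (hd : ∀ᶠ t in atTop, HasDerivAt h (P t * (g t - h t)) t) (hP : ∀ᶠ t in atTop, δ ≤ P t)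
    (hg : Tendsto g atTop (𝓝 l)) (hal : a < l) : ∀ᶠ t in atTop, a < h t := by
  obtain ⟨c, hac, hcl⟩ := exists_between hal
  obtain ⟨d, hcd, hdl⟩ := exists_between hcl
  have hch : ∀ᶠ t in atTop, c ≤ h t := by
    refine eventually_le_of_le_hasDerivAt (mul_pos hδ (sub_pos.2 hcd)) hd ?_
    filter_upwards [hP, hg.eventually_const_lt hdl] with t hPt hgt hht
    exact mul_le_mul hPt (by linarith) (by linarith) (hδ.le.trans hPt)
  exact hch.mono fun t => hac.trans_le

lemma tendsto_of_hasDerivAt_mul_sub (hδ : 0 < δ)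
    (hd : ∀ᶠ t in atTop, HasDerivAt h (P t * (g t - h t)) t) (hP : ∀ᶠ t in atTop, δ ≤ P t)
    (hg : Tendsto g atTop (𝓝 l)) : Tendsto h atTop (𝓝 l) := by
  refine tendsto_order.2
    ⟨fun a ha => eventually_lt_of_hasDerivAt_mul_sub hδ hd hP hg ha, fun a ha => ?_⟩
  have hneg : ∀ᶠ t in atTop, HasDerivAt (fun u => -h u) (P t * (-g t - -h t)) t :=
    hd.mono fun t ht => ht.fun_neg.congr_deriv (by ring)
  filter_upwards [eventually_lt_of_hasDerivAt_mul_sub hδ hneg hP hg.neg (neg_lt_neg ha)] with t ht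
  exact neg_lt_neg_iff.1 ht

-- In logarithmic time the mean `h(eᵗ) / eᵗ` relaxes to `h'(eᵗ)` with unit rate.
lemma tendsto_div_self_of_tendsto_deriv (hd : ∀ᶠ t in atTop, HasDerivAt h (h' t) t)
    (hh' : Tendsto h' atTop (𝓝 l)) : Tendsto (fun t => h t / t) atTop (𝓝 l) := by
  have hmean : ∀ᶠ t in atTop, HasDerivAt (fun u => h (exp u) / exp u)
      (1 * (h' (exp t) - h (exp t) / exp t)) t := by
    filter_upwards [tendsto_exp_atTop.eventually hd] with t ht
    refine ((ht.comp t (Real.hasDerivAt_exp t)).fun_div (Real.hasDerivAt_exp t)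
      (exp_pos t).ne').congr_deriv ?_
    simp only [Function.comp_apply]
    field_simp
  have hlim := tendsto_of_hasDerivAt_mul_sub one_pos hmean (.of_forall fun _ => le_rfl)
    (hh'.comp tendsto_exp_atTop)
  refine (hlim.comp tendsto_log_atTop).congr' ?_
  filter_upwards [eventually_gt_atTop 0] with t ht
  simp only [Function.comp_apply, exp_log ht]

end Relaxation

section LogDeriv

lemma differentiableAt_logDeriv_of_contDiffAt {𝕜 : Type*} [NontriviallyNormedField 𝕜] {f : 𝕜 → 𝕜}
    {x : 𝕜} (hf : ContDiffAt 𝕜 2 f x) (hx : f x ≠ 0) : DifferentiableAt 𝕜 (logDeriv f) x :=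
  ((hf.derivWithin (m := 1) (by norm_num)).differentiableAt one_ne_zero).div
    (hf.differentiableAt two_ne_zero) hx

variable {f : ℝ → ℝ} {x : ℝ}

lemma hasDerivAt_rpow_const_logDeriv (hf : DifferentiableAt ℝ f x) (hx : f x ≠ 0) (p : ℝ) :
    HasDerivAt (fun t => f t ^ p) (p * f x ^ p * logDeriv f x) x := by
  refine (hf.hasDerivAt.rpow_const (Or.inl hx)).congr_deriv ?_
  rw [rpow_sub_one hx, logDeriv_apply]
  ring

lemma deriv_deriv_rpow_const_s6 (hf : ContDiffAt ℝ 2 f x) (hx : f x ≠ 0) (p : ℝ) :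
    deriv (deriv fun t => f t ^ p) x =
      p * f x ^ p * (p * logDeriv f x ^ 2 + deriv (logDeriv f) x) := by
  have hderiv : deriv (fun t => f t ^ p) =ᶠ[𝓝 x] fun t => p * f t ^ p * logDeriv f t := by
    filter_upwards [hf.eventually (by simp), hf.continuousAt.eventually_ne hx] with t hft hft₀
    exact (hasDerivAt_rpow_const_logDeriv (hft.differentiableAt two_ne_zero) hft₀ p).deriv
  rw [hderiv.deriv_eq]
  have hpow := hasDerivAt_rpow_const_logDeriv (hf.differentiableAt two_ne_zero) hx p
  rw [((hpow.const_mul p).fun_mul (differentiableAt_logDeriv_of_contDiffAt hf hx).hasDerivAt).deriv]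
  ring

end LogDeriv

/-- The autonomous planar system `q' = q y`, `y' = A - B y - C y² - b q y`, on the whole time line
and with `q > 0`. It governs `q = r² v^(1-m)` in the time `s = log r`. -/
structure IsLogGrowthSystem (A B C b : ℝ) (q y : ℝ → ℝ) : Prop where
  pos : ∀ s, 0 < q s
  hasDerivAt_fst : ∀ s, HasDerivAt q (q s * y s) s
  hasDerivAt_snd : ∀ s, HasDerivAt y (A - B * y s - C * y s ^ 2 - b * q s * y s) s

namespace IsLogGrowthSystem

variable {A B C b : ℝ} {q y : ℝ → ℝ}

lemma exists_snd_pos (h : IsLogGrowthSystem A B C b q y) (hq : ¬ Antitone q) :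
    ∃ s, 0 < y s := by
  by_contra! hy
  refine hq (antitone_of_deriv_nonpos (fun s => (h.hasDerivAt_fst s).differentiableAt) fun s => ?_)
  rw [(h.hasDerivAt_fst s).deriv]
  exact mul_nonpos_of_nonneg_of_nonpos (h.pos s).le (hy s)

lemma eventually_snd_nonneg (h : IsLogGrowthSystem A B C b q y) (hA : 0 < A)
    (hq : ¬ Antitone q) : ∀ᶠ s in atTop, 0 ≤ y s := by
  obtain ⟨s₀, hs₀⟩ := h.exists_snd_pos hq
  filter_upwards [eventually_ge_atTop s₀] with s hs
  exact le_of_hasDerivAt_of_pos_of_eq (fun t _ => h.hasDerivAt_snd t) hs₀.le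
    (fun t _ hyt => by simpa [hyt] using hA) hs

lemma exists_monotoneOn_fst (h : IsLogGrowthSystem A B C b q y) (hy : ∀ᶠ s in atTop, 0 ≤ y s) :
    ∃ S, MonotoneOn q (Ici S) := by
  obtain ⟨S, hS⟩ := eventually_atTop.1 hy
  exact ⟨S, monotoneOn_of_hasDerivWithinAt_nonneg (convex_Ici S)
    (fun s _ => (h.hasDerivAt_fst s).continuousAt.continuousWithinAt)
    (fun s _ => (h.hasDerivAt_fst s).hasDerivWithinAt)
    fun s hs => mul_nonneg (h.pos s).le (hS s (interior_subset hs))⟩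

lemma exists_pos_le_snd_of_fst_le (h : IsLogGrowthSystem A B C b q y) (hA : 0 < A) (hb : 0 ≤ b)
    (hC : 0 ≤ C) (hy : ∀ᶠ s in atTop, 0 ≤ y s) {M : ℝ} (hM : ∀ᶠ s in atTop, q s ≤ M) :
    ∃ d > 0, ∀ᶠ s in atTop, d ≤ y s := by
  have hlim : Tendsto (fun d => A - (|B| + C * d + b * M) * d) (𝓝[>] 0) (𝓝 A) := by
    have hcont : Continuous fun d => A - (|B| + C * d + b * M) * d := by fun_prop
    simpa using (hcont.tendsto 0).mono_left nhdsWithin_le_nhds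
  obtain ⟨d, hdA, hd⟩ :=
    ((hlim.eventually_const_lt (half_lt_self hA)).and self_mem_nhdsWithin).exists
  refine ⟨d, hd, eventually_le_of_le_hasDerivAt (half_pos hA) (.of_forall h.hasDerivAt_snd) ?_⟩
  filter_upwards [hy, hM] with s hys hMs hyd
  have hrate : B + C * y s + b * q s ≤ |B| + C * d + b * M := by
    gcongr
    exact le_abs_self B
  have hnonneg : 0 ≤ |B| + C * d + b * M :=
    add_nonneg (add_nonneg (abs_nonneg B) (mul_nonneg hC (le_of_lt hd)))
      (mul_nonneg hb ((h.pos s).le.trans hMs))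
  calc A / 2 ≤ A - (|B| + C * d + b * M) * d := hdA.le
    _ ≤ A - (B + C * y s + b * q s) * y s := by gcongr
    _ = A - B * y s - C * y s ^ 2 - b * q s * y s := by ring

lemma tendsto_fst_atTop (h : IsLogGrowthSystem A B C b q y) (hA : 0 < A) (hb : 0 ≤ b)
    (hC : 0 ≤ C) (hy : ∀ᶠ s in atTop, 0 ≤ y s) : Tendsto q atTop atTop := by
  obtain ⟨S, hmono⟩ := h.exists_monotoneOn_fst hy
  refine tendsto_atTop.2 fun M => ?_
  by_contra hnot
  have hM : ∀ᶠ s in atTop, q s ≤ M := by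
    filter_upwards [eventually_ge_atTop S] with s hs
    by_contra! hMs
    refine hnot ?_
    filter_upwards [eventually_ge_atTop s] with t hst
    exact hMs.le.trans (hmono hs (hs.trans hst) hst)
  obtain ⟨d, hd, hdy⟩ := h.exists_pos_le_snd_of_fst_le hA hb hC hy hM
  refine hnot (eventually_le_of_le_hasDerivAt (mul_pos (h.pos S) hd)
    (.of_forall h.hasDerivAt_fst) ?_)
  filter_upwards [hdy, eventually_ge_atTop S] with s hds hs _
  exact mul_le_mul (hmono self_mem_Ici hs hs) hds hd.le (h.pos s).le

lemma tendsto_snd_zero (h : IsLogGrowthSystem A B C b q y) (hb : 0 < b) (hC : 0 ≤ C)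
    (hy : ∀ᶠ s in atTop, 0 ≤ y s) (hq : Tendsto q atTop atTop) : Tendsto y atTop (𝓝 0) := by
  have hP : Tendsto (fun s => b * q s + B + C * y s) atTop atTop := by
    refine tendsto_atTop_mono' _ ?_ (tendsto_atTop_add_const_right _ B (hq.const_mul_atTop hb))
    exact hy.mono fun s hys => le_add_of_nonneg_right (mul_nonneg hC hys)
  have hd : ∀ᶠ s in atTop, HasDerivAt y
      ((b * q s + B + C * y s) * (A / (b * q s + B + C * y s) - y s)) s := by
    filter_upwards [hP.eventually_ne_atTop 0] with s hPs
    refine (h.hasDerivAt_snd s).congr_deriv ?_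
    rw [mul_sub, mul_div_cancel₀ _ hPs]
    ring
  exact tendsto_of_hasDerivAt_mul_sub one_pos hd (hP.eventually_ge_atTop 1) (hP.const_div_atTop A)

lemma tendsto_fst_mul_snd (h : IsLogGrowthSystem A B C b q y) (hb : 0 < b)
    (hq : Tendsto q atTop atTop) (hy : Tendsto y atTop (𝓝 0)) :
    Tendsto (fun s => q s * y s) atTop (𝓝 (A / b)) := by
  have hratio : Tendsto (fun s => b + (B + (C - 1) * y s) / q s) atTop (𝓝 b) := by
    simpa using ((hy.const_mul (C - 1)).const_add B |>.div_atTop hq).const_add b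
  have hP : Tendsto (fun s => q s * (b + (B + (C - 1) * y s) / q s)) atTop atTop :=
    hq.atTop_mul_pos hb hratio
  have hd : ∀ᶠ s in atTop, HasDerivAt (fun s => q s * y s)
      (q s * (b + (B + (C - 1) * y s) / q s) *
        (A / (b + (B + (C - 1) * y s) / q s) - q s * y s)) s := by
    filter_upwards [hratio.eventually_ne hb.ne'] with s hs
    refine ((h.hasDerivAt_fst s).fun_mul (h.hasDerivAt_snd s)).congr_deriv ?_
    have hqs := (h.pos s).ne'
    rw [mul_sub (q s * _), mul_assoc (q s) _ (A / _), mul_div_cancel₀ _ hs]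
    field_simp
    ring
  exact tendsto_of_hasDerivAt_mul_sub one_pos hd (hP.eventually_ge_atTop 1)
    (tendsto_const_nhds.div hratio hb.ne')

theorem tendsto_fst_div_self (h : IsLogGrowthSystem A B C b q y) (hA : 0 < A) (hb : 0 < b)
    (hC : 0 ≤ C) (hq : ¬ Antitone q) : Tendsto (fun s => q s / s) atTop (𝓝 (A / b)) := by
  have hy := h.eventually_snd_nonneg hA hq
  have hq_top := h.tendsto_fst_atTop hA hb.le hC hy
  have hy_zero := h.tendsto_snd_zero hb hC hy hq_top
  exact tendsto_div_self_of_tendsto_deriv (.of_forall h.hasDerivAt_fst)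
    (h.tendsto_fst_mul_snd hb hq_top hy_zero)

end IsLogGrowthSystem

/-- `v` is a positive `C²` solution on `(0, ∞)` of the radial equation of `IsRadialSol`, where the
dimension `N` may be any real number and nothing is prescribed at the origin. -/
structure IsPuncturedRadialSol (N m α β : ℝ) (v : ℝ → ℝ) : Prop where
  pos : ∀ r, 0 < r → 0 < v r
  contDiffOn : ContDiffOn ℝ 2 v (Ioi 0)
  equation : ∀ r, 0 < r →
    (N - 1) / m * (deriv (deriv fun s => v s ^ m) r + (N - 1) / r * deriv (fun s => v s ^ m) r)
      + α * v r + β * r * deriv v r = 0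

namespace IsPuncturedRadialSol

variable {N m α β : ℝ} {v : ℝ → ℝ}

lemma contDiffAt (hv : IsPuncturedRadialSol N m α β v) {r : ℝ} (hr : 0 < r) :
    ContDiffAt ℝ 2 v r :=
  hv.contDiffOn.contDiffAt (Ioi_mem_nhds hr)

lemma differentiableAt (hv : IsPuncturedRadialSol N m α β v) {r : ℝ} (hr : 0 < r) :
    DifferentiableAt ℝ v r :=
  (hv.contDiffAt hr).differentiableAt two_ne_zero

lemma differentiableAt_logDeriv (hv : IsPuncturedRadialSol N m α β v) {r : ℝ} (hr : 0 < r) :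
    DifferentiableAt ℝ (logDeriv v) r :=
  differentiableAt_logDeriv_of_contDiffAt (hv.contDiffAt hr) (hv.pos r hr).ne'

lemma riccati (hv : IsPuncturedRadialSol N m α β v) (hm : m ≠ 0) {r : ℝ} (hr : 0 < r) :
    (N - 1) * (deriv (logDeriv v) r + m * logDeriv v r ^ 2 + (N - 1) / r * logDeriv v r)
      + v r ^ (1 - m) * (α + β * r * logDeriv v r) = 0 := by
  have hvr := hv.pos r hr
  have hderiv : deriv v r = v r * logDeriv v r := (mul_div_cancel₀ _ hvr.ne').symm
  have hsplit : v r = v r ^ m * v r ^ (1 - m) := by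
    rw [← rpow_add hvr, add_sub_cancel, rpow_one]
  have heq := hv.equation r hr
  rw [deriv_deriv_rpow_const_s6 (hv.contDiffAt hr) hvr.ne',
    (hasDerivAt_rpow_const_logDeriv (hv.differentiableAt hr) hvr.ne' m).deriv, hderiv] at heq
  refine (mul_eq_zero_iff_left (rpow_pos_of_pos hvr m).ne').1 (Eq.trans ?_ heq)
  field_simp
  linear_combination (-r * (α + β * r * logDeriv v r)) * hsplit

lemma isLogGrowthSystem (hv : IsPuncturedRadialSol N m (2 * β / (1 - m)) β v) (hN : N ≠ 1)
    (hm₀ : m ≠ 0) (hm₁ : m ≠ 1) :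
    IsLogGrowthSystem (2 * (N - 2 - N * m) / (1 - m)) (N - 2 - 4 * m / (1 - m)) (m / (1 - m))
      (β / (N - 1)) (fun s => exp s ^ 2 * v (exp s) ^ (1 - m))
      (fun s => 2 + (1 - m) * (exp s * logDeriv v (exp s))) where
  pos s := mul_pos (pow_pos (exp_pos s) 2) (rpow_pos_of_pos (hv.pos _ (exp_pos s)) _)
  hasDerivAt_fst s := by
    have hr := exp_pos s
    have hpow := (hasDerivAt_rpow_const_logDeriv (hv.differentiableAt hr) (hv.pos _ hr).ne'
      (1 - m)).comp s (Real.hasDerivAt_exp s)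
    refine (((Real.hasDerivAt_exp s).fun_pow 2).fun_mul hpow).congr_deriv ?_
    simp only [Function.comp_apply]
    ring
  hasDerivAt_snd s := by
    have hr := exp_pos s
    have hlog := (hv.differentiableAt_logDeriv hr).hasDerivAt.comp s (Real.hasDerivAt_exp s)
    refine ((((Real.hasDerivAt_exp s).fun_mul hlog).const_mul (1 - m)).const_add 2).congr_deriv ?_
    simp only [Function.comp_apply]
    have hric := hv.riccati hm₀ hr
    have hN' := sub_ne_zero.2 hN
    have hm' := sub_ne_zero.2 hm₁.symm
    field_simp at hric ⊢
    linear_combination (1 - m) * exp s * hric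

end IsPuncturedRadialSol

lemma IsRadialSol.isPuncturedRadialSol {n : ℕ} {m α β η : ℝ} {v : ℝ → ℝ}
    (hv : IsRadialSol n m α β η v) : IsPuncturedRadialSol n m α β v :=
  let ⟨hpos, _, hC2, _, _, heq⟩ := hv
  ⟨fun r hr => hpos r hr.le, hC2, heq⟩

lemma IsRadialSol.not_antitoneOn_sq_mul_rpow {n : ℕ} {m α β η : ℝ} {v : ℝ → ℝ}
    (hv : IsRadialSol n m α β η v) (p : ℝ) :
    ¬ AntitoneOn (fun r => r ^ 2 * v r ^ p) (Ioi 0) := by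
  obtain ⟨hpos, hcont, -⟩ := hv
  have hlim : Tendsto (fun r => r ^ 2 * v r ^ p) (𝓝[>] 0) (𝓝 0) := by
    have hv₀ := ((hcont 0 self_mem_Ici).mono Ioi_subset_Ici_self).rpow_const (p := p)
      (Or.inl (hpos 0 self_mem_Ici).ne')
    have hsq : Tendsto (fun r : ℝ => r ^ 2) (𝓝[>] 0) (𝓝 (0 ^ 2)) :=
      (continuous_pow 2).continuousWithinAt
    simpa using hsq.mul hv₀.tendsto
  intro hanti
  have hv₁ : 0 < (1 : ℝ) ^ 2 * v 1 ^ p :=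
    mul_pos (by norm_num) (rpow_pos_of_pos (hpos 1 (mem_Ici.2 zero_le_one)) p)
  obtain ⟨r, hr, hr₀, hr₁⟩ :=
    ((hlim.eventually_lt_const hv₁).and (Ioo_mem_nhdsGT one_pos)).exists
  exact hr.not_ge (hanti hr₀ (mem_Ioi.2 one_pos) hr₁.le)

theorem stmt6_general {N m β : ℝ} (hN : 2 < N) (hm₀ : 0 < m) (hm : m < (N - 2) / N) (hβ : 0 < β)
    {v : ℝ → ℝ} (hv : IsPuncturedRadialSol N m (2 * β / (1 - m)) β v)
    (hmono : ¬ AntitoneOn (fun r => r ^ 2 * v r ^ (1 - m)) (Ioi 0)) :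
    Tendsto (fun r => r ^ 2 * v r ^ (1 - m) / log r) atTop
      (𝓝 (2 * (N - 1) * (N - 2 - N * m) / ((1 - m) * β))) := by
  have hNm : 0 < N - 2 - N * m := by
    rw [lt_div_iff₀ (by linarith)] at hm
    linarith
  have hm₁ : m < 1 := hm.trans ((div_lt_one (by linarith)).2 (by linarith))
  have hm' : 0 < 1 - m := sub_pos.2 hm₁
  have hN' : 0 < N - 1 := by linarith
  have hlog : ¬ Antitone fun s => exp s ^ 2 * v (exp s) ^ (1 - m) := fun hanti =>
    hmono fun r hr t ht hrt => by
      simpa only [exp_log hr.out, exp_log ht.out] using hanti (log_le_log hr hrt)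
  have hlim := (hv.isLogGrowthSystem (by linarith) hm₀.ne' hm₁.ne).tendsto_fst_div_self
    (by positivity) (by positivity) (by positivity) hlog
  rw [show 2 * (N - 1) * (N - 2 - N * m) / ((1 - m) * β) =
    2 * (N - 2 - N * m) / (1 - m) / (β / (N - 1)) by field_simp]
  refine (hlim.comp tendsto_log_atTop).congr' ?_
  filter_upwards [eventually_gt_atTop 0] with r hr
  simp only [Function.comp_apply, exp_log hr]

lemma sub_two_div_add_two_lt {N : ℝ} (hN : 2 < N) : (N - 2) / (N + 2) < (N - 2) / N :=
  div_lt_div_of_pos_left (by linarith) (by linarith) (by linarith)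

lemma decay_constant_of_conformal_exponent {N : ℝ} (hN : N + 2 ≠ 0) (β : ℝ) :
    2 * (N - 1) * (N - 2 - N * ((N - 2) / (N + 2))) / ((1 - (N - 2) / (N + 2)) * β) =
      (N - 1) * (N - 2) / β := by
  have hm : 1 - (N - 2) / (N + 2) = 4 / (N + 2) := by field_simp; ring
  have hA : N - 2 - N * ((N - 2) / (N + 2)) = 2 * (N - 2) / (N + 2) := by field_simp; ring
  rw [hm, hA]
  field_simp
  ring

theorem stmt6 (n : ℕ) (hn : 3 ≤ n) (m α β η : ℝ) (hη : 0 < η)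
    (hm : m = ((n : ℝ) - 2) / ((n : ℝ) + 2))
    (hβ : 0 < β) (hα : α = 2 * β / (1 - m))
    (v : ℝ → ℝ) (hv : IsRadialSol n m α β η v) :
    Tendsto (fun r : ℝ => r ^ 2 * v r ^ (1 - m) / Real.log r) atTop
      (nhds (((n : ℝ) - 1) * ((n : ℝ) - 2) / β)) := by
  have hn' : (2 : ℝ) < n := by exact_mod_cast hn
  subst hm hα
  rw [← decay_constant_of_conformal_exponent (by linarith) β]
  exact stmt6_general hn' (div_pos (by linarith) (by linarith)) (sub_two_div_add_two_lt hn') hβ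
    hv.isPuncturedRadialSol (hv.not_antitoneOn_sq_mul_rpow _)
end
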